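/- Let P ⊆ ℝ² be a full-dimensional lattice polygon with irredundant facet presentation h_i(p) = ⟨p,n_i⟩ + a_i ≥ 0 (i = 1,…,r) and lattice points A = P ∩ ℤ², and suppose P has strict linear precision for some positive weights w = (w_m)_{m∈A}. Then there exist a matrix M ∈ GL_2(ℤ) and a vector b ∈ ℤ² such that the image of P under the map x ↦ Mx + b equals either kΔ_2 = {(x,y) : x ≥ 0, y ≥ 0, x + y ≤ k} for some integer k ≥ 1, or the rectangle [0,k] × [0,ℓ] for some integers k, ℓ ≥ 1. -/

import Mathlib

open Finset

noncomputable section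

/-- Lattice distance function `h_i(p) = ⟨p, n_i⟩ + a_i` on `ℝ^d`. -/
def hR {d r : ℕ} (n : Fin r → Fin d → ℤ) (a : Fin r → ℤ) (i : Fin r) (p : Fin d → ℝ) : ℝ :=
  (∑ l, p l * (n i l : ℝ)) + (a i : ℝ)

/-- Lattice distance `h_i(m) = ⟨m, n_i⟩ + a_i` of a lattice point, an integer. -/
def hZ {d r : ℕ} (n : Fin r → Fin d → ℤ) (a : Fin r → ℤ) (i : Fin r) (m : Fin d → ℤ) : ℤ :=
  (∑ l, m l * n i l) + a i

/-- The polytope `P = {p : h_i(p) ≥ 0 ∀ i}`. -/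
def latticePolytope {d r : ℕ} (n : Fin r → Fin d → ℤ) (a : Fin r → ℤ) : Set (Fin d → ℝ) :=
  {p | ∀ i, 0 ≤ hR n a i p}

/-- Coercion of a lattice point of `ℤ^d` to `ℝ^d`. -/
def coeZ {d : ℕ} (m : Fin d → ℤ) : Fin d → ℝ := fun l => (m l : ℝ)

/-- Krasauskas toric blending polynomial `β_m(p) = ∏_i h_i(p)^{h_i(m)}` (with `0^0 = 1`). -/
def toricBeta {d r : ℕ} (n : Fin r → Fin d → ℤ) (a : Fin r → ℤ) (m : Fin d → ℤ)
    (p : Fin d → ℝ) : ℝ :=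
  ∏ i, hR n a i p ^ (hZ n a i m).toNat

/-- `β_w(p) = ∑_{m ∈ A} w_m β_m(p)`. -/
def toricBetaW {d r : ℕ} (n : Fin r → Fin d → ℤ) (a : Fin r → ℤ) (A : Finset (Fin d → ℤ))
    (w : (Fin d → ℤ) → ℝ) (p : Fin d → ℝ) : ℝ :=
  ∑ m ∈ A, w m * toricBeta n a m p

/-- `P` is a full-dimensional lattice polytope with irredundant facet presentation given by
`n_i, a_i` and lattice point set `A = P ∩ ℤ^d`. -/
def IsFacetPresentation {d r : ℕ} (n : Fin r → Fin d → ℤ) (a : Fin r → ℤ)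
    (A : Finset (Fin d → ℤ)) : Prop :=
  IsCompact (latticePolytope n a) ∧
  (interior (latticePolytope n a)).Nonempty ∧
  (∀ m : Fin d → ℤ, m ∈ A ↔ coeZ m ∈ latticePolytope n a) ∧
  latticePolytope n a = convexHull ℝ (coeZ '' (A : Set (Fin d → ℤ))) ∧
  (∀ i, ∃ p ∈ latticePolytope n a, hR n a i p = 0 ∧ ∀ k, k ≠ i → 0 < hR n a k p)

/-- `P` has strict linear precision for the weights `w`:
`β_w(p)·p = ∑_{m ∈ A} w_m β_m(p)·m` for all `p ∈ P`. -/
def StrictLinearPrecision {d r : ℕ} (n : Fin r → Fin d → ℤ) (a : Fin r → ℤ)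
    (A : Finset (Fin d → ℤ)) (w : (Fin d → ℤ) → ℝ) : Prop :=
  ∀ p ∈ latticePolytope n a,
    toricBetaW n a A w p • p = ∑ m ∈ A, (w m * toricBeta n a m p) • coeZ m

open Matrix Polynomial Topology

/-!
Linear precision says that the `β_m`, weighted by `w_m`, average the lattice distances `h_i(m)` to
`h_i(p)`. Since the logarithmic derivative of `β_m` along `v` at an interior point is
`∑ i, h_i(m) ⟨v, n_i⟩ / h_i(p)`, averaging gives `∂_v β_w = ⟨v, ∑ n_i⟩ β_w`. A nonzero polynomial
does not grow exponentially, so `∑ n_i = 0`, the polynomial `β_w` is a constant `c`, and linear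
precision is an identity of polynomials on all of `ℝ^d`.

Evaluate this identity at points outside the polytope. Because `β_w(q) ≠ 0`, some lattice point of
the polytope lies on every facet hyperplane through `q`. At the intersection of `d` independent
hyperplanes this yields a vertex `m₀`, and comparing first orders along lines through `m₀` shows
that `m₀` is a smooth vertex. If another normal `n_i` had a positive coordinate in the basis of
normals at `m₀`, then an edge line of `m₀` would meet the hyperplane `i` behind `m₀`, where
the polytope has no lattice point. So these coordinates are nonpositive integers, and `∑ n_i = 0`
makes them sum to `-1`: for each edge at `m₀` exactly one of the remaining normals has a nonzero
coordinate, and it is `-1`. In the coordinates given by the facets at `m₀` the polytope is therefore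
a product of dilated simplices, which in the plane is a triangle or a rectangle.
-/

section LatticeDistance

variable {d r : ℕ} {n : Fin r → Fin d → ℤ} {a : Fin r → ℤ}

lemma hR_eq_dotProduct (n : Fin r → Fin d → ℤ) (a : Fin r → ℤ) (i : Fin r) (p : Fin d → ℝ) :
    hR n a i p = p ⬝ᵥ coeZ (n i) + a i :=
  rfl

lemma coeZ_dotProduct_coeZ (u v : Fin d → ℤ) : coeZ u ⬝ᵥ coeZ v = (u ⬝ᵥ v : ℤ) := by
  simp [dotProduct, coeZ]

lemma coeZ_dotProduct_self_pos {u : Fin d → ℤ} (hu : u ≠ 0) : 0 < coeZ u ⬝ᵥ coeZ u := by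
  rw [coeZ_dotProduct_coeZ, Int.cast_pos]
  exact (Finset.sum_nonneg fun _ _ => mul_self_nonneg _).lt_of_ne'
    (dotProduct_self_eq_zero.not.mpr hu)

lemma hR_coeZ (n : Fin r → Fin d → ℤ) (a : Fin r → ℤ) (i : Fin r) (m : Fin d → ℤ) :
    hR n a i (coeZ m) = hZ n a i m := by
  simp [hR, hZ, coeZ]

lemma hR_add (n : Fin r → Fin d → ℤ) (a : Fin r → ℤ) (i : Fin r) (p v : Fin d → ℝ) :
    hR n a i (p + v) = hR n a i p + v ⬝ᵥ coeZ (n i) := by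
  simp only [hR_eq_dotProduct, add_dotProduct, add_right_comm]

lemma hR_add_smul (n : Fin r → Fin d → ℤ) (a : Fin r → ℤ) (i : Fin r) (p v : Fin d → ℝ) (t : ℝ) :
    hR n a i (p + t • v) = hR n a i p + t * (v ⬝ᵥ coeZ (n i)) := by
  rw [hR_add, smul_dotProduct, smul_eq_mul]

lemma hZ_eq_hZ_add_sub_dotProduct (n : Fin r → Fin d → ℤ) (a : Fin r → ℤ) (i : Fin r)
    (m m' : Fin d → ℤ) : hZ n a i m' = hZ n a i m + (m' - m) ⬝ᵥ n i := by
  rw [sub_dotProduct]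
  simp only [hZ, dotProduct]
  ring

lemma hZ_nonneg {m : Fin d → ℤ} (hm : coeZ m ∈ latticePolytope n a) (i : Fin r) :
    0 ≤ hZ n a i m := by
  have h : 0 ≤ hR n a i (coeZ m) := hm i
  rw [hR_coeZ] at h
  exact_mod_cast h

lemma eventually_forall_hR_add_smul_pos {p : Fin d → ℝ} (hp : ∀ i, 0 < hR n a i p)
    (v : Fin d → ℝ) : ∀ᶠ t in 𝓝 (0 : ℝ), ∀ i, 0 < hR n a i (p + t • v) := by
  refine Filter.eventually_all.mpr fun i => ?_
  have hcont : ContinuousAt (fun t : ℝ => hR n a i (p + t • v)) 0 := by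
    simp only [hR_add_smul]
    fun_prop
  exact hcont.eventually_const_lt (by simpa using hp i)

lemma toricBetaW_pos {A : Finset (Fin d → ℤ)} {w : (Fin d → ℤ) → ℝ} {p : Fin d → ℝ}
    (hA : A.Nonempty) (hw : ∀ m ∈ A, 0 < w m) (hp : ∀ i, 0 < hR n a i p) :
    0 < toricBetaW n a A w p :=
  Finset.sum_pos (fun m hm => mul_pos (hw m hm) (Finset.prod_pos fun i _ => pow_pos (hp i) _)) hA

end LatticeDistance

section FacetPresentation

variable {d r : ℕ} {n : Fin r → Fin d → ℤ} {a : Fin r → ℤ} {A : Finset (Fin d → ℤ)}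

lemma IsFacetPresentation.nonempty (hP : IsFacetPresentation n a A) : A.Nonempty := by
  obtain ⟨-, hint, -, hhull, -⟩ := hP
  have hne : (latticePolytope n a).Nonempty := hint.mono interior_subset
  rw [hhull, convexHull_nonempty_iff] at hne
  exact Finset.coe_nonempty.mp hne.of_image

lemma IsFacetPresentation.normal_ne_zero [NeZero d] (hP : IsFacetPresentation n a A)
    (i : Fin r) : n i ≠ 0 := by
  obtain ⟨hcpt, -, -, -, hfacet⟩ := hP
  intro hn
  have hconst : ∀ p, hR n a i p = a i := fun p => by simp [hR, hn]
  have hzero : ∀ p, hR n a i p = 0 := fun p => by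
    obtain ⟨q, -, hq, -⟩ := hfacet i
    rw [hconst, ← hconst q, hq]
  have hunique : ∀ k, k = i := fun k => by
    by_contra hk
    obtain ⟨q, -, -, hq⟩ := hfacet k
    exact (hq i (Ne.symm hk)).ne' (hzero q)
  have huniv : latticePolytope n a = Set.univ :=
    Set.eq_univ_of_forall fun p k => (hunique k ▸ hzero p).ge
  exact noncompact_univ (Fin d → ℝ) (huniv ▸ hcpt)

lemma hR_pos_of_mem_interior {p : Fin d → ℝ} (hp : p ∈ interior (latticePolytope n a))
    {i : Fin r} (hn : n i ≠ 0) : 0 < hR n a i p := by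
  refine (interior_subset hp i).lt_of_ne' fun hzero => ?_
  have hcont : Filter.Tendsto (fun t : ℝ => p + t • coeZ (n i)) (𝓝 0) (𝓝 p) :=
    Continuous.tendsto' (by fun_prop) _ _ (by simp)
  have hmem : ∀ᶠ t in 𝓝[<] (0 : ℝ), p + t • coeZ (n i) ∈ latticePolytope n a :=
    nhdsWithin_le_nhds (hcont.eventually (mem_interior_iff_mem_nhds.mp hp))
  obtain ⟨t, ht, hneg⟩ := (hmem.and self_mem_nhdsWithin).exists
  have hnonneg := ht i
  rw [hR_add_smul, hzero, zero_add] at hnonneg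
  exact hnonneg.not_gt (mul_neg_of_neg_of_pos hneg (coeZ_dotProduct_self_pos hn))

lemma IsFacetPresentation.exists_forall_hR_pos [NeZero d] (hP : IsFacetPresentation n a A) :
    ∃ p, ∀ i, 0 < hR n a i p :=
  hP.2.1.imp fun _ hp i => hR_pos_of_mem_interior hp (hP.normal_ne_zero i)

end FacetPresentation

section LinePolynomials

variable {d r : ℕ}

/-- The restriction of the lattice distance `h_i` to the line `t ↦ p + t v`, as a polynomial
in `t`. -/
def linePoly (n : Fin r → Fin d → ℤ) (a : Fin r → ℤ) (p v : Fin d → ℝ) (i : Fin r) : ℝ[X] :=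
  C (hR n a i p) + C (v ⬝ᵥ coeZ (n i)) * X

/-- The restriction of the blending polynomial `β_m` to the line `t ↦ p + t v`, as a polynomial
in `t`. -/
def toricBetaLine (n : Fin r → Fin d → ℤ) (a : Fin r → ℤ) (p v : Fin d → ℝ) (m : Fin d → ℤ) :
    ℝ[X] :=
  ∏ i, linePoly n a p v i ^ (hZ n a i m).toNat

/-- The restriction of `β_w` to the line `t ↦ p + t v`, as a polynomial in `t`. -/
def toricBetaWLine (n : Fin r → Fin d → ℤ) (a : Fin r → ℤ) (A : Finset (Fin d → ℤ))
    (w : (Fin d → ℤ) → ℝ) (p v : Fin d → ℝ) : ℝ[X] :=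
  ∑ m ∈ A, C (w m) * toricBetaLine n a p v m

variable (n : Fin r → Fin d → ℤ) (a : Fin r → ℤ) (A : Finset (Fin d → ℤ)) (w : (Fin d → ℤ) → ℝ)
  (p v : Fin d → ℝ) (m : Fin d → ℤ) (t : ℝ)

lemma eval_linePoly (i : Fin r) : (linePoly n a p v i).eval t = hR n a i (p + t • v) := by
  simp [linePoly, hR_add_smul, mul_comm t]

lemma eval_toricBetaLine :
    (toricBetaLine n a p v m).eval t = toricBeta n a m (p + t • v) := by
  simp [toricBetaLine, toricBeta, eval_prod, eval_linePoly]

lemma eval_toricBetaWLine :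
    (toricBetaWLine n a A w p v).eval t = toricBetaW n a A w (p + t • v) := by
  simp [toricBetaWLine, toricBetaW, eval_finsetSum, eval_toricBetaLine]

variable {n a p} in
lemma X_pow_dvd_toricBetaLine {s : Finset (Fin r)} (hs : ∀ i ∈ s, hR n a i p = 0) :
    X ^ (∑ i ∈ s, (hZ n a i m).toNat) ∣ toricBetaLine n a p v m := by
  have hX : ∀ i ∈ s, X ∣ linePoly n a p v i := fun i hi => by
    simp [linePoly, hs i hi]
  rw [← Finset.prod_pow_eq_pow_sum]
  exact (Finset.prod_dvd_prod_of_dvd _ _ fun i hi => pow_dvd_pow_of_dvd (hX i hi) _).trans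
    (Finset.prod_dvd_prod_of_subset _ _ _ (Finset.subset_univ s))

lemma eq_of_eventually_eval_eq {f g : ℝ[X]} {t₀ : ℝ}
    (h : ∀ᶠ t in 𝓝 t₀, f.eval t = g.eval t) : f = g :=
  eq_of_infinite_eval_eq f g (infinite_of_mem_nhds t₀ h)

lemma eq_zero_of_derivative_eq_C_mul_self {f : ℝ[X]} (hf : f ≠ 0) {c : ℝ}
    (h : derivative f = C c * f) : c = 0 := by
  by_contra hc
  have hdeg := degree_derivative_lt hf
  rw [h, degree_C_mul hc] at hdeg
  exact hdeg.false

end LinePolynomials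

section StrictLinearPrecision

variable {d r : ℕ} {n : Fin r → Fin d → ℤ} {a : Fin r → ℤ} {A : Finset (Fin d → ℤ)}
  {w : (Fin d → ℤ) → ℝ} {p : Fin d → ℝ}

lemma StrictLinearPrecision.sum_mul_hZ (hslp : StrictLinearPrecision n a A w)
    (hp : p ∈ latticePolytope n a) (i : Fin r) :
    ∑ m ∈ A, w m * toricBeta n a m p * hZ n a i m = toricBetaW n a A w p * hR n a i p := by
  have h := congrArg (· ⬝ᵥ coeZ (n i)) (hslp p hp)
  simp only [sum_dotProduct, smul_dotProduct, smul_eq_mul] at h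
  simp only [← hR_coeZ, hR_eq_dotProduct, mul_add, Finset.sum_add_distrib, ← Finset.sum_mul]
  rw [h, toricBetaW]

lemma StrictLinearPrecision.eq_zero_of_forall_dotProduct_eq_zero
    (hslp : StrictLinearPrecision n a A w) (hp : p ∈ latticePolytope n a)
    (hβ : toricBetaW n a A w p ≠ 0) {v : Fin d → ℝ} (hv : ∀ i, v ⬝ᵥ coeZ (n i) = 0) : v = 0 := by
  have hR_inv : ∀ i, hR n a i (p + v) = hR n a i p := fun i => by
    rw [hR_add, hv, add_zero]
  have hβ_inv : ∀ m, toricBeta n a m (p + v) = toricBeta n a m p := fun m => by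
    simp only [toricBeta, hR_inv]
  have htranslate := hslp (p + v) fun i => (hR_inv i).symm ▸ hp i
  simp only [toricBetaW, hβ_inv] at htranslate
  rw [← hslp p hp] at htranslate
  simpa using smul_right_injective _ hβ htranslate

lemma logDeriv_toricBeta_line {m : Fin d → ℤ} (hm : ∀ i, 0 ≤ hZ n a i m)
    (hp : ∀ i, hR n a i p ≠ 0) (v : Fin d → ℝ) :
    logDeriv (fun t : ℝ => toricBeta n a m (p + t • v)) 0
      = ∑ i, hZ n a i m * ((v ⬝ᵥ coeZ (n i)) / hR n a i p) := by
  have hline : ∀ i, HasDerivAt (fun t : ℝ => hR n a i (p + t • v)) (v ⬝ᵥ coeZ (n i)) 0 := by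
    intro i
    simp only [hR_add_smul]
    simpa using ((hasDerivAt_id (0 : ℝ)).mul_const _).const_add (hR n a i p)
  have hdiff : ∀ i, DifferentiableAt ℝ (fun t : ℝ => hR n a i (p + t • v)) 0 :=
    fun i => (hline i).differentiableAt
  simp only [toricBeta]
  rw [logDeriv_prod (fun i _ => pow_ne_zero _ (by simpa using hp i))
    (fun i _ => (hdiff i).fun_pow _)]
  refine Finset.sum_congr rfl fun i _ => ?_
  rw [logDeriv_fun_pow (hdiff i), logDeriv_apply, (hline i).deriv, zero_smul, add_zero,
    ← Int.cast_natCast, Int.toNat_of_nonneg (hm i)]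

lemma deriv_toricBeta_line {m : Fin d → ℤ} (hm : ∀ i, 0 ≤ hZ n a i m)
    (hp : ∀ i, 0 < hR n a i p) (v : Fin d → ℝ) :
    deriv (fun t : ℝ => toricBeta n a m (p + t • v)) 0
      = toricBeta n a m p * ∑ i, hZ n a i m * ((v ⬝ᵥ coeZ (n i)) / hR n a i p) := by
  have hne : toricBeta n a m p ≠ 0 :=
    Finset.prod_ne_zero_iff.mpr fun i _ => pow_ne_zero _ (hp i).ne'
  rw [← logDeriv_toricBeta_line hm (fun i => (hp i).ne'), logDeriv_apply, zero_smul, add_zero,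
    mul_div_cancel₀ _ hne]

lemma StrictLinearPrecision.deriv_toricBetaW_line (hslp : StrictLinearPrecision n a A w)
    (hA : ∀ m ∈ A, coeZ m ∈ latticePolytope n a) (hp : ∀ i, 0 < hR n a i p) (v : Fin d → ℝ) :
    deriv (fun t : ℝ => toricBetaW n a A w (p + t • v)) 0
      = (∑ i, v ⬝ᵥ coeZ (n i)) * toricBetaW n a A w p := by
  have hdiff : ∀ m ∈ A, DifferentiableAt ℝ (fun t : ℝ => w m * toricBeta n a m (p + t • v)) 0 := by
    intro m _
    simp only [← eval_toricBetaLine]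
    fun_prop
  calc deriv (fun t : ℝ => toricBetaW n a A w (p + t • v)) 0
    _ = ∑ m ∈ A, w m * deriv (fun t : ℝ => toricBeta n a m (p + t • v)) 0 := by
      simp only [toricBetaW, deriv_fun_sum hdiff, deriv_const_mul_field']
    _ = ∑ m ∈ A, ∑ i, w m * toricBeta n a m p * hZ n a i m *
          ((v ⬝ᵥ coeZ (n i)) / hR n a i p) := by
      refine Finset.sum_congr rfl fun m hm => ?_
      rw [deriv_toricBeta_line (hZ_nonneg (hA m hm)) hp, Finset.mul_sum, Finset.mul_sum]
      exact Finset.sum_congr rfl fun i _ => by ring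
    _ = ∑ i, toricBetaW n a A w p * hR n a i p * ((v ⬝ᵥ coeZ (n i)) / hR n a i p) := by
      rw [Finset.sum_comm]
      simp only [← Finset.sum_mul, hslp.sum_mul_hZ fun i => (hp i).le]
    _ = (∑ i, v ⬝ᵥ coeZ (n i)) * toricBetaW n a A w p := by
      rw [Finset.sum_mul]
      refine Finset.sum_congr rfl fun i _ => ?_
      field_simp [(hp i).ne']

lemma StrictLinearPrecision.derivative_toricBetaWLine (hslp : StrictLinearPrecision n a A w)
    (hA : ∀ m ∈ A, coeZ m ∈ latticePolytope n a) (hp : ∀ i, 0 < hR n a i p) (v : Fin d → ℝ) :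
    derivative (toricBetaWLine n a A w p v)
      = C (∑ i, v ⬝ᵥ coeZ (n i)) * toricBetaWLine n a A w p v := by
  refine eq_of_eventually_eval_eq (t₀ := 0) ?_
  filter_upwards [eventually_forall_hR_add_smul_pos hp v] with t ht
  have hshift : ∀ s : ℝ, toricBetaW n a A w (p + t • v + s • v)
      = (toricBetaWLine n a A w p v).eval (t + s) := fun s => by
    rw [eval_toricBetaWLine, add_smul, add_assoc]
  have hderiv := hslp.deriv_toricBetaW_line hA ht v
  simp only [hshift] at hderiv
  rw [deriv_comp_const_add (fun s => (toricBetaWLine n a A w p v).eval s) t, add_zero,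
    Polynomial.deriv] at hderiv
  rw [hderiv, eval_mul, eval_C, eval_toricBetaWLine]

lemma toricBetaWLine_ne_zero (hβ : toricBetaW n a A w p ≠ 0) (v : Fin d → ℝ) :
    toricBetaWLine n a A w p v ≠ 0 := by
  refine fun h => hβ ?_
  simpa [h] using (eval_toricBetaWLine n a A w p v 0).symm

lemma StrictLinearPrecision.sum_dotProduct_normal_eq_zero (hslp : StrictLinearPrecision n a A w)
    (hA : ∀ m ∈ A, coeZ m ∈ latticePolytope n a) (hp : ∀ i, 0 < hR n a i p)
    (hβ : toricBetaW n a A w p ≠ 0) (v : Fin d → ℝ) : ∑ i, v ⬝ᵥ coeZ (n i) = 0 :=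
  eq_zero_of_derivative_eq_C_mul_self (toricBetaWLine_ne_zero hβ v)
    (hslp.derivative_toricBetaWLine hA hp v)

lemma StrictLinearPrecision.sum_normal_eq_zero (hslp : StrictLinearPrecision n a A w)
    (hA : ∀ m ∈ A, coeZ m ∈ latticePolytope n a) (hp : ∀ i, 0 < hR n a i p)
    (hβ : toricBetaW n a A w p ≠ 0) : ∑ i, n i = 0 := by
  by_contra h
  refine (coeZ_dotProduct_self_pos h).ne' ?_
  rw [coeZ_dotProduct_coeZ, dotProduct_sum, Int.cast_sum]
  simp only [← coeZ_dotProduct_coeZ, hslp.sum_dotProduct_normal_eq_zero hA hp hβ]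

lemma StrictLinearPrecision.toricBetaW_eq (hslp : StrictLinearPrecision n a A w)
    (hA : ∀ m ∈ A, coeZ m ∈ latticePolytope n a) (hp : ∀ i, 0 < hR n a i p)
    (hβ : toricBetaW n a A w p ≠ 0) (q : Fin d → ℝ) :
    toricBetaW n a A w q = toricBetaW n a A w p := by
  have hder := hslp.derivative_toricBetaWLine hA hp (q - p)
  rw [hslp.sum_dotProduct_normal_eq_zero hA hp hβ, C_0, zero_mul] at hder
  have hconst := eq_C_of_derivative_eq_zero hder
  have heval : ∀ t, toricBetaW n a A w (p + t • (q - p))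
      = (toricBetaWLine n a A w p (q - p)).coeff 0 := fun t => by
    rw [← eval_toricBetaWLine, hconst, eval_C, coeff_C_zero]
  simpa using (heval 1).trans (heval 0).symm

/-- Linear precision in its global form: on all of `ℝ^d`, not only on the polytope, `β_w` is the
constant `c` and the blending functions `w_m β_m / c` reproduce every lattice distance. -/
structure GlobalLinearPrecision (n : Fin r → Fin d → ℤ) (a : Fin r → ℤ) (A : Finset (Fin d → ℤ))
    (w : (Fin d → ℤ) → ℝ) (c : ℝ) : Prop where
  toricBetaW_eq : ∀ q, toricBetaW n a A w q = c
  sum_mul_hZ : ∀ i q, ∑ m ∈ A, w m * toricBeta n a m q * hZ n a i m = c * hR n a i q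

lemma StrictLinearPrecision.globalLinearPrecision (hslp : StrictLinearPrecision n a A w)
    (hA : ∀ m ∈ A, coeZ m ∈ latticePolytope n a) (hp : ∀ i, 0 < hR n a i p)
    (hβ : toricBetaW n a A w p ≠ 0) :
    GlobalLinearPrecision n a A w (toricBetaW n a A w p) where
  toricBetaW_eq := hslp.toricBetaW_eq hA hp hβ
  sum_mul_hZ i q := by
    have hpoly : ∑ m ∈ A, C (w m) * toricBetaLine n a p (q - p) m * C (hZ n a i m : ℝ)
        = toricBetaWLine n a A w p (q - p) * linePoly n a p (q - p) i := by
      refine eq_of_eventually_eval_eq (t₀ := 0) ?_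
      filter_upwards [eventually_forall_hR_add_smul_pos hp (q - p)] with t ht
      simpa [eval_finsetSum, eval_toricBetaLine, eval_toricBetaWLine, eval_linePoly]
        using hslp.sum_mul_hZ (fun k => (ht k).le) i
    simpa [eval_finsetSum, eval_toricBetaLine, eval_toricBetaWLine, eval_linePoly,
      hslp.toricBetaW_eq hA hp hβ] using congrArg (eval 1) hpoly

end StrictLinearPrecision

section GlobalLinearPrecision

variable {d r : ℕ} {n : Fin r → Fin d → ℤ} {a : Fin r → ℤ} {A : Finset (Fin d → ℤ)}
  {w : (Fin d → ℤ) → ℝ} {c : ℝ}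

lemma GlobalLinearPrecision.exists_hZ_eq_zero (hglob : GlobalLinearPrecision n a A w c)
    (hc : c ≠ 0) (hA : ∀ m ∈ A, coeZ m ∈ latticePolytope n a) (q : Fin d → ℝ) :
    ∃ m ∈ A, ∀ i, hR n a i q = 0 → hZ n a i m = 0 := by
  have hsum : ∑ m ∈ A, w m * toricBeta n a m q ≠ 0 := (hglob.toricBetaW_eq q).trans_ne hc
  obtain ⟨m, hm, hterm⟩ := Finset.exists_ne_zero_of_sum_ne_zero hsum
  refine ⟨m, hm, fun i hi => ?_⟩
  have hfactor := Finset.prod_ne_zero_iff.mp (right_ne_zero_of_mul hterm) i (Finset.mem_univ i)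
  rw [hi, ne_eq, pow_eq_zero_iff', not_and_not_right] at hfactor
  have hexp := hfactor rfl
  have hnonneg := hZ_nonneg (hA m hm) i
  omega

-- Along a line through `q` leaving the facet `i`, the right-hand side of linear precision for `h_i`
-- vanishes to first order only, so some `β_m` with `h_i(m) ≠ 0` does too.
lemma GlobalLinearPrecision.exists_not_X_sq_dvd_toricBetaLine
    (hglob : GlobalLinearPrecision n a A w c) (hc : c ≠ 0) {i : Fin r} (hn : n i ≠ 0)
    {q : Fin d → ℝ} (hi : hR n a i q = 0) :
    ∃ m ∈ A, hZ n a i m ≠ 0 ∧ ¬ X ^ 2 ∣ toricBetaLine n a q (coeZ (n i)) m := by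
  let v : Fin d → ℝ := coeZ (n i)
  have hpoly : ∑ m ∈ A, C (w m * hZ n a i m) * toricBetaLine n a q v m = C (c * (v ⬝ᵥ v)) * X := by
    refine Polynomial.funext fun t => ?_
    have h := hglob.sum_mul_hZ i (q + t • v)
    rw [hR_add_smul, hi, zero_add] at h
    simp only [eval_finsetSum, eval_mul, eval_C, eval_X, eval_toricBetaLine]
    rw [mul_assoc, mul_comm (v ⬝ᵥ v), ← h]
    exact Finset.sum_congr rfl fun m _ => mul_right_comm _ _ _
  have hndvd : ¬ X ^ 2 ∣ ∑ m ∈ A, C (w m * hZ n a i m) * toricBetaLine n a q v m := by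
    rw [hpoly, X_pow_dvd_iff]
    intro h
    have hcoeff := h 1 one_lt_two
    rw [coeff_C_mul, coeff_X_one, mul_one] at hcoeff
    exact mul_ne_zero hc (coeZ_dotProduct_self_pos hn).ne' hcoeff
  obtain ⟨m, hm, hmndvd⟩ :
      ∃ m ∈ A, ¬ X ^ 2 ∣ C (w m * hZ n a i m) * toricBetaLine n a q v m := by
    by_contra! h
    exact hndvd (Finset.dvd_sum h)
  exact ⟨m, hm, fun h => hmndvd (by simp [h]), fun h => hmndvd (h.mul_left _)⟩

lemma GlobalLinearPrecision.exists_hZ_eq_one (hglob : GlobalLinearPrecision n a A w c)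
    (hc : c ≠ 0) (hA : ∀ m ∈ A, coeZ m ∈ latticePolytope n a) {i : Fin r} (hn : n i ≠ 0)
    {q : Fin d → ℝ} (hi : hR n a i q = 0) :
    ∃ m ∈ A, hZ n a i m = 1 ∧ ∀ l ≠ i, hR n a l q = 0 → hZ n a l m = 0 := by
  obtain ⟨m, hm, hne, hmndvd⟩ := hglob.exists_not_X_sq_dvd_toricBetaLine hc hn hi
  have horder : ∀ s : Finset (Fin r), (∀ l ∈ s, hR n a l q = 0) →
      ∑ l ∈ s, (hZ n a l m).toNat < 2 := fun s hs => by
    by_contra! h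
    exact hmndvd ((pow_dvd_pow X h).trans (X_pow_dvd_toricBetaLine _ m hs))
  have hnonneg := hZ_nonneg (hA m hm)
  have hone : hZ n a i m = 1 := by
    have h := horder {i} (by simpa using hi)
    rw [Finset.sum_singleton] at h
    have := hnonneg i
    omega
  refine ⟨m, hm, hone, fun l hl hlq => ?_⟩
  have h := horder {l, i} (by simp [hi, hlq])
  rw [Finset.sum_pair hl] at h
  have := hnonneg l
  omega

end GlobalLinearPrecision

section IntegerAndMatrixLemmas

lemma exists_isUnit_submatrix {K m n : Type*} [Field K] [Finite m] [Fintype n] [DecidableEq n]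
    {N : Matrix m n K} (hN : LinearIndependent K N.col) :
    ∃ ι : n → m, IsUnit (N.submatrix ι id) := by
  have := Fintype.ofFinite m
  obtain ⟨κ, e, he, hspan, hli⟩ := exists_linearIndependent' K N.row
  have := Finite.of_injective e he
  have := Fintype.ofFinite κ
  have hrank : N.rank = Fintype.card n :=
    (rank_transpose N).symm.trans (LinearIndependent.rank_matrix hN)
  have hcard : Fintype.card n = Fintype.card κ := by
    rw [← finrank_span_eq_card hli, hspan, ← rank_eq_finrank_span_row, hrank]
  let f := Fintype.equivOfCardEq hcard
  exact ⟨e ∘ f, linearIndependent_rows_iff_isUnit.mp (hli.comp f f.injective)⟩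

lemma exists_forall_eq_neg_ite_of_sum_eq_neg_one {α : Type*} [DecidableEq α] {s : Finset α}
    {f : α → ℤ} (hf : ∀ l ∈ s, f l ≤ 0) (hsum : ∑ l ∈ s, f l = -1) :
    ∃ k ∈ s, ∀ l ∈ s, f l = -if k = l then 1 else 0 := by
  obtain ⟨k, hk, hne⟩ := Finset.exists_ne_zero_of_sum_ne_zero (hsum.trans_ne (by decide))
  have herase : ∀ l ∈ s.erase k, f l ≤ 0 := fun l hl => hf l (Finset.mem_of_mem_erase hl)
  have hrest : ∑ l ∈ s.erase k, f l = 0 := by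
    have := Finset.add_sum_erase s f hk
    have := Finset.sum_nonpos herase
    have := hf k hk
    omega
  have hzero := (Finset.sum_eq_zero_iff_of_nonpos herase).mp hrest
  refine ⟨k, hk, fun l hl => ?_⟩
  split_ifs with hkl
  · rw [← hkl, ← hsum, ← Finset.add_sum_erase s f hk, hrest, add_zero]
  · exact hzero l (Finset.mem_erase.mpr ⟨Ne.symm hkl, hl⟩)

end IntegerAndMatrixLemmas

section SmoothVertex

variable {d r : ℕ} {n : Fin r → Fin d → ℤ} {a : Fin r → ℤ} {ι : Fin d → Fin r} {m₀ : Fin d → ℤ}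
  {u : Matrix (Fin d) (Fin d) ℤ}

/-- The lattice point `m₀` is a smooth vertex of the polytope: the facets through it are exactly
the `d` facets `ι j`, and their normals form a basis of `ℤ^d`. The rows of `u` are the dual
basis, that is, the primitive edge directions at `m₀`. -/
structure IsSmoothVertex (n : Fin r → Fin d → ℤ) (a : Fin r → ℤ) (ι : Fin d → Fin r)
    (m₀ : Fin d → ℤ) (u : Matrix (Fin d) (Fin d) ℤ) : Prop where
  hZ_eq_zero : ∀ j, hZ n a (ι j) m₀ = 0
  hZ_pos : ∀ i ∉ Set.range ι, 0 < hZ n a i m₀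
  mulVec_normal : ∀ j, u *ᵥ n (ι j) = Pi.single j 1

/-- The point with coordinates `y` in the affine frame with origin `m₀` and basis the rows
of `u`. -/
def framePoint (m₀ : Fin d → ℤ) (u : Matrix (Fin d) (Fin d) ℤ) (y : Fin d → ℝ) : Fin d → ℝ :=
  coeZ m₀ + y ᵥ* u.map (Int.cast : ℤ → ℝ)

lemma hR_framePoint (i : Fin r) (y : Fin d → ℝ) :
    hR n a i (framePoint m₀ u y) = hZ n a i m₀ + y ⬝ᵥ coeZ (u *ᵥ n i) := by
  have hcast : u.map (Int.cast : ℤ → ℝ) *ᵥ coeZ (n i) = coeZ (u *ᵥ n i) :=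
    funext fun k => ((Int.castRingHom ℝ).map_mulVec u (n i) k).symm
  rw [framePoint, hR_add, hR_coeZ, ← dotProduct_mulVec, hcast]

lemma transpose_normals_mul_edges (hu : ∀ j, u *ᵥ n (ι j) = Pi.single j 1) :
    (of (n ∘ ι))ᵀ * u = 1 := by
  refine mul_eq_one_comm.mp (Matrix.ext fun k j => ?_)
  have h := congrFun (hu j) k
  rwa [Pi.single_apply, ← one_apply] at h

lemma isUnit_det_normals (hu : ∀ j, u *ᵥ n (ι j) = Pi.single j 1) :
    IsUnit (of (n ∘ ι)).det := by
  rw [← det_transpose]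
  exact isUnit_det_of_right_inverse (transpose_normals_mul_edges hu)

namespace IsSmoothVertex

lemma injective (h : IsSmoothVertex n a ι m₀ u) : Function.Injective ι := fun j k hjk => by
  have hsingle : (Pi.single j 1 : Fin d → ℤ) = Pi.single k 1 := by
    rw [← h.mulVec_normal, hjk, h.mulVec_normal]
  by_contra hne
  simpa [hne] using congrFun hsingle j

lemma hR_framePoint_self (h : IsSmoothVertex n a ι m₀ u) (j : Fin d) (y : Fin d → ℝ) :
    hR n a (ι j) (framePoint m₀ u y) = y j := by
  simp [hR_framePoint, h.hZ_eq_zero, h.mulVec_normal, coeZ, dotProduct, Pi.single_apply]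

lemma framePoint_hR (h : IsSmoothVertex n a ι m₀ u) (p : Fin d → ℝ) :
    framePoint m₀ u (fun j => hR n a (ι j) p) = p := by
  have hdist : (fun j => hR n a (ι j) p)
      = (p - coeZ m₀) ᵥ* (of (n ∘ ι))ᵀ.map (Int.castRingHom ℝ) := funext fun j => by
    conv_lhs =>
      rw [← add_sub_cancel (coeZ m₀) p, hR_add, hR_coeZ, h.hZ_eq_zero, Int.cast_zero, zero_add]
    rfl
  have hinv : (of (n ∘ ι))ᵀ.map (Int.castRingHom ℝ) * u.map (Int.castRingHom ℝ) = 1 := by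
    rw [← Matrix.map_mul, transpose_normals_mul_edges h.mulVec_normal,
      Matrix.map_one _ (map_zero _) (map_one _)]
  change coeZ m₀ + _ ᵥ* u.map (Int.castRingHom ℝ) = p
  rw [hdist, vecMul_vecMul, hinv, vecMul_one, add_sub_cancel]

lemma image_latticePolytope (h : IsSmoothVertex n a ι m₀ u) :
    (fun p j => hR n a (ι j) p) '' latticePolytope n a
      = {y | (∀ j, 0 ≤ y j) ∧ ∀ i ∉ Set.range ι, 0 ≤ hZ n a i m₀ + y ⬝ᵥ coeZ (u *ᵥ n i)} := by
  ext y
  constructor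
  · rintro ⟨p, hp, rfl⟩
    refine ⟨fun j => hp (ι j), fun i _ => ?_⟩
    rw [← hR_framePoint, h.framePoint_hR]
    exact hp i
  · rintro ⟨hy, hfacet⟩
    refine ⟨framePoint m₀ u y, fun i => ?_, funext fun j => h.hR_framePoint_self j y⟩
    by_cases hi : i ∈ Set.range ι
    · obtain ⟨j, rfl⟩ := hi
      exact (hy j).trans_eq (h.hR_framePoint_self j y).symm
    · exact (hfacet i hi).trans_eq (hR_framePoint i y).symm

end IsSmoothVertex

end SmoothVertex

section SmoothVertexOfLinearPrecision

variable {d r : ℕ} {n : Fin r → Fin d → ℤ} {a : Fin r → ℤ} {A : Finset (Fin d → ℤ)}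
  {w : (Fin d → ℤ) → ℝ} {c : ℝ} {p : Fin d → ℝ} {ι : Fin d → Fin r} {m₀ : Fin d → ℤ}
  {u : Matrix (Fin d) (Fin d) ℤ}

lemma exists_linearIndependent_normals
    (hn : ∀ v : Fin d → ℝ, (∀ i, v ⬝ᵥ coeZ (n i) = 0) → v = 0) :
    ∃ ι : Fin d → Fin r, LinearIndependent ℝ (fun j => coeZ (n (ι j))) ∧
      ∃ q, ∀ j, hR n a (ι j) q = 0 := by
  let N : Matrix (Fin r) (Fin d) ℝ := of fun i => coeZ (n i)
  have hN : LinearIndependent ℝ N.col := by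
    rw [← mulVec_injective_iff]
    refine (injective_iff_map_eq_zero N.mulVecLin).mpr fun v hv => hn v fun i => ?_
    exact (dotProduct_comm _ _).trans (congrFun hv i)
  obtain ⟨ι, hι⟩ := exists_isUnit_submatrix hN
  refine ⟨ι, linearIndependent_rows_iff_isUnit.mpr hι, ?_⟩
  obtain ⟨q, hq⟩ := mulVec_surjective_iff_isUnit.mpr hι fun j => -(a (ι j) : ℝ)
  refine ⟨q, fun j => ?_⟩
  rw [hR_eq_dotProduct, dotProduct_comm]
  exact eq_neg_iff_add_eq_zero.mp (congrFun hq j)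

lemma GlobalLinearPrecision.exists_isSmoothVertex (hglob : GlobalLinearPrecision n a A w c)
    (hc : c ≠ 0) (hA : ∀ m ∈ A, coeZ m ∈ latticePolytope n a)
    (hn : ∀ v : Fin d → ℝ, (∀ i, v ⬝ᵥ coeZ (n i) = 0) → v = 0) (hp : ∀ i, 0 < hR n a i p) :
    ∃ ι m₀ u, IsSmoothVertex n a ι m₀ u := by
  obtain ⟨ι, hι, q, hq⟩ := exists_linearIndependent_normals (a := a) hn
  have hι_inj : Function.Injective ι := fun _ _ h => hι.injective (congrArg (coeZ ∘ n) h)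
  have hι_ne : ∀ j, n (ι j) ≠ 0 := fun j h => hι.ne_zero j (by
    rw [h]
    exact funext fun _ => Int.cast_zero)
  obtain ⟨m₀, hm₀A, hm₀⟩ := hglob.exists_hZ_eq_zero hc hA q
  have hvertex : ∀ j, hZ n a (ι j) m₀ = 0 := fun j => hm₀ _ (hq j)
  choose m _ hone hzero using fun j =>
    hglob.exists_hZ_eq_one hc hA (hι_ne j) (q := coeZ m₀) (by simp [hR_coeZ, hvertex])
  let u : Matrix (Fin d) (Fin d) ℤ := of fun j => m j - m₀
  have hslope : ∀ i, hZ n a i m₀ = 0 → ∀ j, (u *ᵥ n i) j = hZ n a i (m j) := fun i hi j => by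
    rw [hZ_eq_hZ_add_sub_dotProduct n a i m₀, hi, zero_add]
    rfl
  have hu : ∀ j, u *ᵥ n (ι j) = Pi.single j 1 := fun j => funext fun k => by
    rw [hslope _ (hvertex j), Pi.single_apply]
    split_ifs with hkj
    · rw [hkj, hone]
    · exact hzero k _ (hι_inj.ne (Ne.symm hkj)) (by simp [hR_coeZ, hvertex])
  refine ⟨ι, m₀, u, hvertex, fun i hi => ?_, hu⟩
  refine (hZ_nonneg (hA m₀ hm₀A) i).lt_of_ne' fun hi₀ => ?_
  have hedges : u *ᵥ n i = 0 := funext fun j => by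
    rw [hslope i hi₀]
    exact hzero j i (fun h => hi ⟨j, h.symm⟩) (by simp [hR_coeZ, hi₀])
  have hnormal : n i = 0 := eq_zero_of_mulVec_eq_zero
    (isUnit_det_of_left_inverse (transpose_normals_mul_edges hu)).ne_zero hedges
  have hconst : hR n a i p = hR n a i (coeZ m₀) := by simp [hR, hnormal]
  exact (hp i).ne' (by rw [hconst, hR_coeZ, hi₀, Int.cast_zero])

namespace IsSmoothVertex

lemma mulVec_normal_nonpos (h : IsSmoothVertex n a ι m₀ u)
    (hglob : GlobalLinearPrecision n a A w c) (hc : c ≠ 0)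
    (hA : ∀ m ∈ A, coeZ m ∈ latticePolytope n a) {i : Fin r} (hi : i ∉ Set.range ι)
    (j : Fin d) : (u *ᵥ n i) j ≤ 0 := by
  by_contra! hpos
  set g := hZ n a i m₀
  set α := (u *ᵥ n i) j
  have hg : 0 < g := h.hZ_pos i hi
  let q : Fin d → ℝ := framePoint m₀ u (Pi.single j (-g / α))
  have hqi : hR n a i q = 0 := by
    have hα : (α : ℝ) ≠ 0 := Int.cast_ne_zero.mpr hpos.ne'
    rw [hR_framePoint, single_dotProduct]
    change (g : ℝ) + -g / α * α = 0
    field_simp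
    ring
  obtain ⟨m, hm, hzero⟩ := hglob.exists_hZ_eq_zero hc hA q
  have hedge : (fun k => hR n a (ι k) (coeZ m)) = Pi.single j (hZ n a (ι j) m : ℝ) := by
    funext k
    rw [hR_coeZ, Pi.single_apply]
    split_ifs with hkj
    · rw [hkj]
    · rw [hzero (ι k) (by simp [q, h.hR_framePoint_self, hkj]), Int.cast_zero]
  have hm_i : (hZ n a i m : ℝ) = g + hZ n a (ι j) m * α := by
    rw [← hR_coeZ, ← h.framePoint_hR (coeZ m), hedge, hR_framePoint, single_dotProduct]
    rfl
  rw [hzero i hqi] at hm_i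
  have hle := mul_nonneg (hZ_nonneg (hA m hm) (ι j)) hpos.le
  have : (0 : ℤ) = g + hZ n a (ι j) m * α := by exact_mod_cast hm_i
  omega

lemma sum_mulVec_normal_eq_neg_one (h : IsSmoothVertex n a ι m₀ u) (hn : ∑ i, n i = 0)
    (j : Fin d) : ∑ i with i ∉ Set.range ι, (u *ᵥ n i) j = -1 := by
  have hall : ∑ i, (u *ᵥ n i) j = 0 := by
    rw [← Finset.sum_apply, ← mulVec_sum, hn, mulVec_zero, Pi.zero_apply]
  have hrange : ∑ i with i ∈ Set.range ι, (u *ᵥ n i) j = 1 := by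
    have himage : ({i | i ∈ Set.range ι} : Finset (Fin r)) = Finset.univ.image ι := by
      ext
      simp
    rw [himage, Finset.sum_image h.injective.injOn]
    simp [h.mulVec_normal, Pi.single_apply]
  have := Finset.sum_filter_add_sum_filter_not Finset.univ (· ∈ Set.range ι) fun i => (u *ᵥ n i) j
  omega

lemma exists_mulVec_normal_eq (h : IsSmoothVertex n a ι m₀ u)
    (hglob : GlobalLinearPrecision n a A w c) (hc : c ≠ 0)
    (hA : ∀ m ∈ A, coeZ m ∈ latticePolytope n a) (hn : ∑ i, n i = 0) :
    ∃ σ : Fin d → Fin r, (∀ j, σ j ∉ Set.range ι) ∧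
      ∀ i ∉ Set.range ι, ∀ j, (u *ᵥ n i) j = -if σ j = i then 1 else 0 := by
  choose σ hσ hslope using fun j => exists_forall_eq_neg_ite_of_sum_eq_neg_one
    (fun i hi => h.mulVec_normal_nonpos hglob hc hA (Finset.mem_filter.mp hi).2 j)
    (h.sum_mulVec_normal_eq_neg_one hn j)
  exact ⟨σ, fun j => (Finset.mem_filter.mp (hσ j)).2,
    fun i hi j => hslope j i (Finset.mem_filter.mpr ⟨Finset.mem_univ i, hi⟩)⟩

end IsSmoothVertex

end SmoothVertexOfLinearPrecision

section SimplexProduct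

/-- The polytope `{y ≥ 0 : ∑_{σ j = s} y_j ≤ k_s for all s}`, a product of dilated standard
simplices, one factor `k_s Δ` in the coordinates `σ⁻¹ s` for each value `s` of `σ`. -/
def simplexProduct {ι κ : Type*} [Fintype ι] [DecidableEq κ] (σ : ι → κ) (k : κ → ℕ) :
    Set (ι → ℝ) :=
  {y | (∀ j, 0 ≤ y j) ∧ ∀ s, ∑ j with σ j = s, y j ≤ k s}

lemma simplexProduct_fin_two_of_eq {κ : Type*} [DecidableEq κ] {σ : Fin 2 → κ} (hσ : σ 0 = σ 1)
    (k : κ → ℕ) :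
    simplexProduct σ k = {y : Fin 2 → ℝ | 0 ≤ y 0 ∧ 0 ≤ y 1 ∧ y 0 + y 1 ≤ k (σ 0)} := by
  ext y
  simp only [simplexProduct, Fin.forall_fin_two, Finset.sum_filter, Fin.sum_univ_two, ← hσ,
    Set.mem_ofPred_eq, and_assoc]
  refine and_congr_right fun _ => and_congr_right fun _ =>
    ⟨fun h => by simpa using h (σ 0), fun h s => ?_⟩
  rcases eq_or_ne (σ 0) s with rfl | hs
  · simpa using h
  · simp [hs]

lemma simplexProduct_fin_two_of_ne {κ : Type*} [DecidableEq κ] {σ : Fin 2 → κ} (hσ : σ 0 ≠ σ 1)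
    (k : κ → ℕ) :
    simplexProduct σ k
      = {y : Fin 2 → ℝ | 0 ≤ y 0 ∧ y 0 ≤ k (σ 0) ∧ 0 ≤ y 1 ∧ y 1 ≤ k (σ 1)} := by
  ext y
  simp only [simplexProduct, Fin.forall_fin_two, Finset.sum_filter, Fin.sum_univ_two,
    Set.mem_ofPred_eq]
  constructor
  · rintro ⟨⟨h0, h1⟩, h⟩
    exact ⟨h0, by simpa [hσ.symm] using h (σ 0), h1, by simpa [hσ] using h (σ 1)⟩
  · rintro ⟨h0, hk0, h1, hk1⟩
    refine ⟨⟨h0, h1⟩, fun s => ?_⟩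
    rcases eq_or_ne (σ 0) s with rfl | hs0
    · simpa [hσ.symm] using hk0
    · rcases eq_or_ne (σ 1) s with rfl | hs1
      · simpa [hσ] using hk1
      · simp [hs0, hs1]

lemma IsSmoothVertex.image_eq_simplexProduct {d r : ℕ} {n : Fin r → Fin d → ℤ}
    {a : Fin r → ℤ} {ι : Fin d → Fin r} {m₀ : Fin d → ℤ} {u : Matrix (Fin d) (Fin d) ℤ}
    (h : IsSmoothVertex n a ι m₀ u) {σ : Fin d → Fin r} (hσ : ∀ j, σ j ∉ Set.range ι)
    (hslope : ∀ i ∉ Set.range ι, ∀ j, (u *ᵥ n i) j = -if σ j = i then 1 else 0) :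
    (fun p j => hR n a (ι j) p) '' latticePolytope n a
      = simplexProduct σ fun i => (hZ n a i m₀).toNat := by
  have hfacet : ∀ i ∉ Set.range ι, ∀ y : Fin d → ℝ,
      0 ≤ hZ n a i m₀ + y ⬝ᵥ coeZ (u *ᵥ n i) ↔ ∑ j with σ j = i, y j ≤ (hZ n a i m₀).toNat := by
    intro i hi y
    have hdot : y ⬝ᵥ coeZ (u *ᵥ n i) = -∑ j with σ j = i, y j := by
      simp only [dotProduct, coeZ, hslope i hi, Finset.sum_filter, ← Finset.sum_neg_distrib]
      exact Finset.sum_congr rfl fun j _ => by split_ifs <;> simp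
    rw [hdot, ← Int.cast_natCast, Int.toNat_of_nonneg (h.hZ_pos i hi).le, ← sub_eq_add_neg,
      sub_nonneg]
  rw [h.image_latticePolytope]
  ext y
  refine and_congr_right fun _ => ⟨fun hy i => ?_, fun hy i hi => (hfacet i hi y).mpr (hy i)⟩
  by_cases hi : i ∈ Set.range ι
  · have hempty : ∀ j ∈ Finset.univ, σ j ≠ i := fun j _ hj => hσ j (hj.symm ▸ hi)
    rw [Finset.filter_false_of_mem hempty, Finset.sum_empty]
    exact Nat.cast_nonneg _
  · exact (hfacet i hi y).mp (hy i hi)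

end SimplexProduct

theorem slp_polygon_classification_general {d r : ℕ} {n : Fin r → Fin d → ℤ} {a : Fin r → ℤ}
    {A : Finset (Fin d → ℤ)} {w : (Fin d → ℤ) → ℝ} {p : Fin d → ℝ}
    (hA : ∀ m ∈ A, coeZ m ∈ latticePolytope n a) (hp : ∀ i, 0 < hR n a i p)
    (hβ : toricBetaW n a A w p ≠ 0) (hslp : StrictLinearPrecision n a A w) :
    ∃ (M : Matrix (Fin d) (Fin d) ℤ) (b : Fin d → ℤ) (σ : Fin d → Fin r) (k : Fin r → ℕ),
      IsUnit M.det ∧ (∀ j, 1 ≤ k (σ j)) ∧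
      (fun (x : Fin d → ℝ) l => (∑ j, (M l j : ℝ) * x j) + b l) '' latticePolytope n a
        = simplexProduct σ k := by
  have hglob := hslp.globalLinearPrecision hA hp hβ
  have hspan : ∀ v : Fin d → ℝ, (∀ i, v ⬝ᵥ coeZ (n i) = 0) → v = 0 :=
    fun _ => hslp.eq_zero_of_forall_dotProduct_eq_zero (fun i => (hp i).le) hβ
  obtain ⟨ι, m₀, u, hvertex⟩ := hglob.exists_isSmoothVertex hβ hA hspan hp
  obtain ⟨σ, hσ, hslope⟩ :=
    hvertex.exists_mulVec_normal_eq hglob hβ hA (hslp.sum_normal_eq_zero hA hp hβ)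
  refine ⟨of (n ∘ ι), a ∘ ι, σ, fun i => (hZ n a i m₀).toNat,
    isUnit_det_normals hvertex.mulVec_normal, fun j => ?_, ?_⟩
  · exact Int.lt_toNat.mpr (hvertex.hZ_pos _ (hσ j))
  · rw [← hvertex.image_eq_simplexProduct hσ hslope]
    refine Set.image_congr fun x _ => funext fun j => ?_
    simp only [hR, mul_comm (x _)]
    rfl

/-- A full-dimensional lattice polygon in `ℝ²` with strict linear precision
for some positive weights is, up to an affine unimodular transformation `x ↦ Mx + b` with
`M ∈ GL₂(ℤ)` and `b ∈ ℤ²`, either a dilated standard triangle `kΔ₂` (`k ≥ 1`) or a rectangle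
`[0,k] × [0,ℓ]` (`k, ℓ ≥ 1`). -/
theorem slp_polygon_classification {r : ℕ}
    (n : Fin r → Fin 2 → ℤ) (a : Fin r → ℤ) (A : Finset (Fin 2 → ℤ))
    (hP : IsFacetPresentation n a A)
    (w : (Fin 2 → ℤ) → ℝ) (hw : ∀ m ∈ A, 0 < w m)
    (hslp : StrictLinearPrecision n a A w) :
    ∃ (M : Matrix (Fin 2) (Fin 2) ℤ) (b : Fin 2 → ℤ), IsUnit M.det ∧
      ((∃ k : ℕ, 1 ≤ k ∧
          (fun x : Fin 2 → ℝ => fun l => (∑ j, (M l j : ℝ) * x j) + (b l : ℝ)) ''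
              latticePolytope n a =
            {p : Fin 2 → ℝ | 0 ≤ p 0 ∧ 0 ≤ p 1 ∧ p 0 + p 1 ≤ (k : ℝ)}) ∨
       (∃ k l : ℕ, 1 ≤ k ∧ 1 ≤ l ∧
          (fun x : Fin 2 → ℝ => fun l' => (∑ j, (M l' j : ℝ) * x j) + (b l' : ℝ)) ''
              latticePolytope n a =
            {p : Fin 2 → ℝ | 0 ≤ p 0 ∧ p 0 ≤ (k : ℝ) ∧ 0 ≤ p 1 ∧ p 1 ≤ (l : ℝ)})) := by
  obtain ⟨p, hp⟩ := hP.exists_forall_hR_pos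
  have hβ := toricBetaW_pos hP.nonempty hw hp
  obtain ⟨M, b, σ, k, hM, hk, himage⟩ :=
    slp_polygon_classification_general (fun m => (hP.2.2.1 m).mp) hp hβ.ne' hslp
  refine ⟨M, b, hM, ?_⟩
  rw [himage]
  by_cases hσ : σ 0 = σ 1
  · exact .inl ⟨k (σ 0), hk 0, simplexProduct_fin_two_of_eq hσ k⟩
  · exact .inr ⟨k (σ 0), k (σ 1), hk 0, hk 1, simplexProduct_fin_two_of_ne hσ k⟩
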